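/- arXiv:2011.07056 — 2 statements merged into one kernel-verified Lean document; each statement's English description precedes it below -/
import Mathlib

section
/- Let U be a set of k ≥ 2 distinct positive integers and let ε > 0. Then there exists a bounded set A ⊆ ℝ with dim_M A ≤ 1 − 1/k + ε such that for every x ∈ [0,1] there exists r ∈ ℝ with x + r·u ∈ A for every u ∈ U. Consequently, for all sufficiently large N one has G'_U(N) ≤ N^{1 − 1/k + ε}. -/
open Set Filter Bornology

/-- Covering number of `E` by open balls of radius `ε`. -/
noncomputable def covNum {X : Type*} [PseudoMetricSpace X] (E : Set X) (ε : ℝ) : ℕ∞ :=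
  ⨅ (t : Finset X) (_ : E ⊆ ⋃ x ∈ t, Metric.ball x ε), (t.card : ℕ∞)

/-- Upper Minkowski (box-counting) dimension. -/
noncomputable def dimM {X : Type*} [PseudoMetricSpace X] (E : Set X) : ℝ :=
  limsup (fun ε : ℝ => Real.log ((covNum E ε).toNat) / Real.log (1 / ε))
    (nhdsWithin 0 (Ioi 0))

/-- Packing dimension, as modified upper box dimension: the infimum of
`⨆ j, dimM (E j)` over countable covers of the set by bounded sets. -/
noncomputable def dimP {X : Type*} [PseudoMetricSpace X] (E : Set X) : ℝ :=
  sInf { a : ℝ | ∃ f : ℕ → Set X, (E ⊆ ⋃ j, f j) ∧ (∀ j, IsBounded (f j)) ∧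
    a = ⨆ j, dimM (f j) }

/-- `G'Unat U N` : the minimum cardinality of a finite set `B ⊆ ℤ` containing a `U`-pattern
`{x + r·u : u ∈ U}` (with `r ≠ 0`) for `N` distinct integer basepoints `x`. -/
noncomputable def G'Unat (U : Finset ℕ) (N : ℕ) : ℕ :=
  sInf { m | ∃ B : Finset ℤ, B.card = m ∧ ∃ X : Finset ℤ, X.card = N ∧
    ∀ x ∈ X, ∃ r : ℤ, r ≠ 0 ∧ ∀ u ∈ U, x + r * (u : ℤ) ∈ B }

/-!
Fix a large base `q` and nonzero weights `w₁, …, w_k`. Call `y` near-integral at scale `n` if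
`q ^ n * y` is within `O(1 / q)` of an integer: then only `O(1)` integers, rather than `O(q)`, can
be nearest to `q ^ (n + 1) * y` once the one nearest to `q ^ n * y` is known. The set of points of
a bounded interval that are near-integral at every scale `n ≡ i (mod k)` is therefore covered by
`O((O(1) * O(q) ^ (k - 1)) ^ l)` intervals of length `q ^ (-k * l)`, so that its dimension is at
most `1 - 1 / k + ε` for large `q`. Given `x`, a scaling factor `r` for which `x + r * wᵢ` lies in
the `i`-th of these sets, for every `i`, is the limit of a greedy procedure: at step
`n ≡ i (mod k)`, move `r` by `O(q ^ (-n))` so that `q ^ n * (x + r * wᵢ)` becomes an integer; the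
later moves add up to `O(q ^ (-n - 1))` and spoil this only by `O(1 / q)`. Rounding a
`1 / N`-neighbourhood of the union of these sets to the lattice `ℤ / N` gives the bound on
`G'_U(N)`.
-/

section Covering

variable {X : Type*} [PseudoMetricSpace X] {E : Set X} {s : ℝ}

/-- `E` is covered by `O(δ ^ (-s))` balls of radius `δ`, uniformly in `0 < δ ≤ 1`. This is the
quantitative form of `dimM E ≤ s`, which can be used at a single scale. -/
def HasCoveringExponent (E : Set X) (s : ℝ) : Prop :=
  ∃ C : ℝ, ∀ δ : ℝ, 0 < δ → δ ≤ 1 →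
    ∃ t : Finset X, E ⊆ ⋃ x ∈ t, Metric.ball x δ ∧ (t.card : ℝ) ≤ C * (1 / δ) ^ s

theorem HasCoveringExponent.isBounded (hE : HasCoveringExponent E s) : IsBounded E := by
  obtain ⟨C, hC⟩ := hE
  obtain ⟨t, ht, -⟩ := hC 1 one_pos le_rfl
  exact ((isBounded_biUnion_finset t).2 fun _ _ => Metric.isBounded_ball).subset ht

theorem HasCoveringExponent.iUnion {ι : Type*} [Finite ι] {E : ι → Set X}
    (hE : ∀ i, HasCoveringExponent (E i) s) : HasCoveringExponent (⋃ i, E i) s := by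
  classical
  have := Fintype.ofFinite ι
  choose C hC using hE
  refine ⟨∑ i, C i, fun δ hδ hδ1 => ?_⟩
  choose t ht htC using fun i => hC i δ hδ hδ1
  refine ⟨Finset.univ.biUnion t, iUnion_subset fun i => (ht i).trans ?_, ?_⟩
  · exact biUnion_subset_biUnion_left fun c hc => Finset.mem_biUnion.2 ⟨i, Finset.mem_univ i, hc⟩
  · calc ((Finset.univ.biUnion t).card : ℝ) ≤ ∑ i, ((t i).card : ℝ) := by
          exact_mod_cast Finset.card_biUnion_le
      _ ≤ ∑ i, C i * (1 / δ) ^ s := Finset.sum_le_sum fun i _ => htC i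
      _ = (∑ i, C i) * (1 / δ) ^ s := (Finset.sum_mul _ _ _).symm

theorem HasCoveringExponent.of_geometric {b C : ℝ} (hb : 1 < b) (hs : 0 ≤ s)
    (h : ∀ n : ℕ, ∃ t : Finset X, E ⊆ ⋃ x ∈ t, Metric.ball x (1 / b ^ n) ∧
      (t.card : ℝ) ≤ C * (b ^ s) ^ n) :
    HasCoveringExponent E s := by
  have hb0 : 0 < b := one_pos.trans hb
  have hC : 0 ≤ C := by
    obtain ⟨t, -, htC⟩ := h 0
    simpa only [pow_zero, mul_one] using t.card.cast_nonneg.trans htC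
  refine ⟨C * b ^ s, fun δ hδ hδ1 => ?_⟩
  obtain ⟨l, hl, hl'⟩ := exists_nat_pow_near (one_le_one_div hδ hδ1) hb
  obtain ⟨t, ht, htC⟩ := h (l + 1)
  have hrad : 1 / b ^ (l + 1) ≤ δ := (one_div_lt hδ (pow_pos hb0 _)).1 hl' |>.le
  refine ⟨t, ht.trans (iUnion₂_mono fun x _ => Metric.ball_subset_ball hrad), ?_⟩
  calc (t.card : ℝ) ≤ C * (b ^ s) ^ (l + 1) := htC
    _ = C * b ^ s * (b ^ l) ^ s := by rw [pow_succ', ← Real.rpow_pow_comm hb0.le]; ring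
    _ ≤ C * b ^ s * (1 / δ) ^ s := by gcongr

theorem covNum_toNat_le_card {t : Finset X} {δ : ℝ} (ht : E ⊆ ⋃ x ∈ t, Metric.ball x δ) :
    (covNum E δ).toNat ≤ t.card := by
  have hcov : covNum E δ ≤ (t.card : ℕ∞) := iInf₂_le t ht
  simpa using ENat.toNat_le_toNat hcov (ENat.natCast_ne_top _)

theorem HasCoveringExponent.exists_log_covNum_le (hE : HasCoveringExponent E s) (hs : 0 ≤ s) :
    ∃ c : ℝ, ∀ δ : ℝ, 0 < δ → δ ≤ 1 →
      Real.log (covNum E δ).toNat ≤ c + s * Real.log (1 / δ) := by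
  obtain ⟨C, hC⟩ := hE
  refine ⟨Real.log (max C 1), fun δ hδ hδ1 => ?_⟩
  obtain ⟨t, ht, htC⟩ := hC δ hδ hδ1
  have hone : 1 ≤ 1 / δ := one_le_one_div hδ hδ1
  have hpow : 1 ≤ (1 / δ) ^ s := Real.one_le_rpow hone hs
  have hbound : ((covNum E δ).toNat : ℝ) ≤ max C 1 * (1 / δ) ^ s :=
    calc ((covNum E δ).toNat : ℝ) ≤ t.card := by exact_mod_cast covNum_toNat_le_card ht
      _ ≤ C * (1 / δ) ^ s := htC
      _ ≤ max C 1 * (1 / δ) ^ s := by gcongr; exact le_max_left C 1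
  have hlog : Real.log (max C 1 * (1 / δ) ^ s) = Real.log (max C 1) + s * Real.log (1 / δ) := by
    rw [Real.log_mul (by positivity) (by positivity), Real.log_rpow (by positivity)]
  rw [← hlog]
  rcases Nat.eq_zero_or_pos (covNum E δ).toNat with h0 | hpos
  · rw [h0, Nat.cast_zero, Real.log_zero]
    exact Real.log_nonneg (one_le_mul_of_one_le_of_one_le (le_max_right C 1) hpow)
  · exact Real.log_le_log (by exact_mod_cast hpos) hbound

theorem HasCoveringExponent.dimM_le (hE : HasCoveringExponent E s) (hs : 0 ≤ s) :
    dimM E ≤ s := by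
  obtain ⟨c, hc⟩ := hE.exists_log_covNum_le hs
  have hsmall : ∀ᶠ δ : ℝ in nhdsWithin 0 (Ioi 0), 0 < δ ∧ δ < 1 := Ioo_mem_nhdsGT one_pos
  have hL : Tendsto (fun δ : ℝ => Real.log (1 / δ)) (nhdsWithin 0 (Ioi 0)) atTop := by
    simp only [one_div]
    exact Real.tendsto_log_atTop.comp tendsto_inv_nhdsGT_zero
  have hlim : Tendsto (fun δ : ℝ => c / Real.log (1 / δ) + s) (nhdsWithin 0 (Ioi 0)) (nhds s) := by
    simpa only [zero_add] using (hL.const_div_atTop c).add_const s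
  have hle : ∀ᶠ δ : ℝ in nhdsWithin 0 (Ioi 0),
      Real.log (covNum E δ).toNat / Real.log (1 / δ) ≤ c / Real.log (1 / δ) + s := by
    filter_upwards [hsmall] with δ hδ
    have hpos : 0 < Real.log (1 / δ) := Real.log_pos (one_lt_one_div hδ.1 hδ.2)
    rw [div_le_iff₀ hpos, add_mul, div_mul_cancel₀ _ hpos.ne']
    exact hc δ hδ.1 hδ.2.le
  have hnonneg : ∀ᶠ δ : ℝ in nhdsWithin 0 (Ioi 0),
      0 ≤ Real.log (covNum E δ).toNat / Real.log (1 / δ) := by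
    filter_upwards [hsmall] with δ hδ
    exact div_nonneg (Real.log_natCast_nonneg _) (Real.log_nonneg (one_le_one_div hδ.1 hδ.2.le))
  have hcobdd := IsCoboundedUnder.of_frequently_ge hnonneg.frequently
  exact (limsup_le_limsup hle hcobdd hlim.isBoundedUnder_le).trans_eq hlim.limsup_eq

end Covering

theorem abs_round_le_of_abs_le {x : ℝ} {K : ℕ} (hx : |x| ≤ K) : |round x| ≤ K := by
  have hlt : |(round x : ℝ)| < K + 1 := by
    have htri := abs_sub_abs_le_abs_sub (round x : ℝ) x
    rw [abs_sub_comm] at htri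
    linarith [abs_sub_round x]
  exact Int.lt_add_one_iff.1 (by exact_mod_cast hlt)

theorem abs_round_mul_sub_mul_round_le {q K : ℕ} {z : ℝ} (hq : 0 < q)
    (hz : |z - round z| ≤ K / q) : |round (q * z) - q * round z| ≤ K := by
  have hq' : (0 : ℝ) < q := by exact_mod_cast hq
  have hdist : |q * z - (q * round z : ℤ)| ≤ K := by
    rw [le_div_iff₀ hq'] at hz
    push_cast
    rwa [← mul_sub, abs_mul, abs_of_pos hq', mul_comm]
  rw [← round_sub_intCast]
  exact abs_round_le_of_abs_le hdist

theorem exists_int_ne_zero_abs_sub_le_one (y : ℝ) : ∃ m : ℤ, m ≠ 0 ∧ |(m : ℝ) - y| ≤ 1 := by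
  rcases lt_or_ge y 0 with hy | hy
  · refine ⟨⌈y⌉ - 1, by have := Int.ceil_le.2 (show y ≤ (0 : ℤ) by simpa using hy.le); omega, ?_⟩
    push_cast
    rw [abs_le]
    constructor <;> linarith [Int.le_ceil y, Int.ceil_lt_add_one y]
  · refine ⟨⌊y⌋ + 1, by have := Int.floor_nonneg.2 hy; omega, ?_⟩
    push_cast
    rw [abs_le]
    constructor <;> linarith [Int.floor_le y, Int.lt_floor_add_one y]

theorem prod_range_mul_of_periodic {M : Type*} [CommMonoid M] {f : ℕ → M} {p : ℕ}
    (hf : Function.Periodic f p) (l : ℕ) :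
    ∏ j ∈ Finset.range (p * l), f j = (∏ j ∈ Finset.range p, f j) ^ l := by
  induction l with
  | zero => simp only [mul_zero, Finset.range_zero, Finset.prod_empty, pow_zero]
  | succ l ih =>
    rw [mul_add_one, Finset.prod_range_add, ih, pow_succ]
    congr 1
    refine Finset.prod_congr rfl fun j _ => ?_
    rw [add_comm, mul_comm]
    exact hf.nat_mul l j

section NearIntegralSet

/-- The points `y` of `[-R, R]` such that, for every `n`, the number `q ^ n * y` is within `K n / q`
of an integer. There is no constraint at the scales where `q ≤ 2 * K n`. -/
def nearIntegralSet (q : ℕ) (K : ℕ → ℕ) (R : ℕ) : Set ℝ :=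
  {y | |y| ≤ R ∧ ∀ n, |(q : ℝ) ^ n * y - round ((q : ℝ) ^ n * y)| ≤ K n / q}

variable {q R : ℕ} {K : ℕ → ℕ}

theorem exists_finset_round_mem_of_mem_nearIntegralSet (hq : 0 < q) (n : ℕ) :
    ∃ T : Finset ℤ, T.card ≤ (2 * R + 1) * ∏ j ∈ Finset.range n, (2 * K j + 1) ∧
      ∀ y ∈ nearIntegralSet q K R, round ((q : ℝ) ^ n * y) ∈ T := by
  have hcard : ∀ m : ℕ, (Finset.Icc (-m : ℤ) m).card = 2 * m + 1 := fun m => by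
    rw [Int.card_Icc]
    omega
  induction n with
  | zero =>
    refine ⟨Finset.Icc (-R) R, by simp [hcard], fun y hy => ?_⟩
    rw [pow_zero, one_mul, Finset.mem_Icc, ← abs_le]
    exact abs_round_le_of_abs_le hy.1
  | succ n ih =>
    obtain ⟨T, hT, hmem⟩ := ih
    refine ⟨Finset.image₂ (fun a d => q * a + d) T (Finset.Icc (-K n) (K n)), ?_, fun y hy => ?_⟩
    · rw [Finset.prod_range_succ, ← mul_assoc, ← hcard (K n)]
      exact (Finset.card_image₂_le _ _ _).trans (Nat.mul_le_mul_right _ hT)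
    · refine Finset.mem_image₂.2 ⟨_, hmem y hy,
        round ((q : ℝ) ^ (n + 1) * y) - q * round ((q : ℝ) ^ n * y), ?_, add_sub_cancel _ _⟩
      rw [Finset.mem_Icc, ← abs_le, pow_succ', mul_assoc]
      exact abs_round_mul_sub_mul_round_le hq (hy.2 n)

theorem exists_cover_nearIntegralSet (hq : 0 < q) (n : ℕ) :
    ∃ t : Finset ℝ, nearIntegralSet q K R ⊆ ⋃ x ∈ t, Metric.ball x (1 / (q : ℝ) ^ n) ∧
      t.card ≤ (2 * R + 1) * ∏ j ∈ Finset.range n, (2 * K j + 1) := by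
  obtain ⟨T, hT, hmem⟩ := exists_finset_round_mem_of_mem_nearIntegralSet (R := R) (K := K) hq n
  have hpow : (0 : ℝ) < (q : ℝ) ^ n := by positivity
  refine ⟨T.image fun a : ℤ => (a : ℝ) / (q : ℝ) ^ n, fun y hy => ?_,
    Finset.card_image_le.trans hT⟩
  refine mem_biUnion (Finset.mem_image_of_mem _ (hmem y hy)) ?_
  have hround : |((q : ℝ) ^ n * y - round ((q : ℝ) ^ n * y)) / (q : ℝ) ^ n| < 1 / (q : ℝ) ^ n := by
    rw [abs_div, abs_of_pos hpow]
    gcongr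
    exact (abs_sub_round _).trans_lt one_half_lt_one
  rwa [sub_div, mul_div_cancel_left₀ _ hpow.ne'] at hround

theorem hasCoveringExponent_nearIntegralSet {p : ℕ} {s : ℝ} (hq : 1 < q) (hp : p ≠ 0) (hs : 0 ≤ s)
    (hK : Function.Periodic K p)
    (hprod : ((∏ j ∈ Finset.range p, (2 * K j + 1) : ℕ) : ℝ) ≤ ((q : ℝ) ^ p) ^ s) :
    HasCoveringExponent (nearIntegralSet q K R) s := by
  have hb : 1 < (q : ℝ) ^ p := one_lt_pow₀ (by exact_mod_cast hq) hp
  refine .of_geometric hb hs (C := 2 * R + 1) fun l => ?_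
  obtain ⟨t, ht, hcard⟩ := exists_cover_nearIntegralSet (R := R) (K := K) (by omega : 0 < q) (p * l)
  have hper : Function.Periodic (fun j => 2 * K j + 1) p := hK.comp fun m => 2 * m + 1
  rw [prod_range_mul_of_periodic hper] at hcard
  refine ⟨t, by rwa [← pow_mul], ?_⟩
  calc (t.card : ℝ) ≤ (2 * R + 1) * ((∏ j ∈ Finset.range p, (2 * K j + 1) : ℕ) : ℝ) ^ l := by
        exact_mod_cast hcard
    _ ≤ (2 * R + 1) * (((q : ℝ) ^ p) ^ s) ^ l := by gcongr

end NearIntegralSet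

section GreedyScale

/-- Successive approximations to a scaling factor `r`: the `n`-th step makes the least change to `r`
after which `b ^ n * (x + r * w n)` is an integer. -/
noncomputable def greedyScale (b : ℝ) (w : ℕ → ℝ) (x : ℝ) : ℕ → ℝ
  | 0 => 0
  | n + 1 => (round (b ^ n * (x + greedyScale b w x n * w n)) / b ^ n - x) / w n

variable {b m M : ℝ} {w : ℕ → ℝ}

theorem pow_mul_add_greedyScale_succ (hb : b ≠ 0) (x : ℝ) {n : ℕ} (hw : w n ≠ 0) :
    b ^ n * (x + greedyScale b w x (n + 1) * w n)
      = round (b ^ n * (x + greedyScale b w x n * w n)) := by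
  rw [greedyScale, div_mul_cancel₀ _ hw, add_sub_cancel, mul_div_cancel₀ _ (pow_ne_zero n hb)]

theorem dist_greedyScale_succ_le (hb : 0 < b) (hm : 0 < m) (x : ℝ) {n : ℕ} (hw : m ≤ |w n|) :
    dist (greedyScale b w x n) (greedyScale b w x (n + 1)) ≤ 1 / (2 * m) * (1 / b) ^ n := by
  have hpow : 0 < b ^ n := pow_pos hb n
  set r := greedyScale b w x n
  set r' := greedyScale b w x (n + 1)
  have hround : b ^ n * (x + r' * w n) = round (b ^ n * (x + r * w n)) :=
    pow_mul_add_greedyScale_succ hb.ne' x (abs_pos.1 (hm.trans_le hw))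
  have hmove : b ^ n * |r - r'| * |w n| ≤ 1 / 2 :=
    calc b ^ n * |r - r'| * |w n| = |b ^ n * (x + r * w n) - b ^ n * (x + r' * w n)| := by
          rw [← mul_sub, add_sub_add_left_eq_sub, ← sub_mul, abs_mul, abs_mul, abs_of_pos hpow,
            mul_assoc]
      _ ≤ 1 / 2 := hround ▸ abs_sub_round _
  have hmove' : b ^ n * |r - r'| * m ≤ 1 / 2 := le_trans (by gcongr) hmove
  rw [Real.dist_eq, one_div_pow, div_mul_div_comm, one_mul, le_div_iff₀ (by positivity)]
  linarith

theorem exists_forall_dist_greedyScale_le (hb : 2 ≤ b) (hm : 0 < m) (hw : ∀ n, m ≤ |w n|) (x : ℝ) :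
    ∃ r, ∀ n, dist (greedyScale b w x n) r ≤ 1 / m * (1 / b) ^ n := by
  have hb0 : 0 < b := by linarith
  have hhalf : 1 / b ≤ 1 / 2 := one_div_le_one_div_of_le two_pos hb
  have hlt : 1 / b < 1 := by linarith
  have hstep := fun n => dist_greedyScale_succ_le hb0 hm x (hw n)
  obtain ⟨r, hr⟩ := cauchySeq_tendsto_of_complete (cauchySeq_of_le_geometric _ _ hlt hstep)
  refine ⟨r, fun n => (dist_le_of_le_geometric_of_tendsto _ _ hlt hstep hr n).trans ?_⟩
  calc 1 / (2 * m) * (1 / b) ^ n / (1 - 1 / b) ≤ 1 / (2 * m) * (1 / b) ^ n / (1 / 2) := by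
        gcongr
        linarith
    _ = 1 / m * (1 / b) ^ n := by field_simp

theorem exists_scale_forall_abs_sub_round_le (hb : 2 ≤ b) (hm : 0 < m) (hmw : ∀ n, m ≤ |w n|)
    (hwM : ∀ n, |w n| ≤ M) (x : ℝ) :
    ∃ r, |r| ≤ 1 / m ∧
      ∀ n, |b ^ n * (x + r * w n) - round (b ^ n * (x + r * w n))| ≤ M / m / b := by
  have hb0 : 0 < b := by linarith
  obtain ⟨r, hr⟩ := exists_forall_dist_greedyScale_le hb hm hmw x
  refine ⟨r, by simpa [greedyScale] using hr 0, fun n => ?_⟩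
  have hpow : 0 < b ^ n := pow_pos hb0 n
  set r' := greedyScale b w x (n + 1) with hr'
  have hdist : |r - r'| ≤ 1 / m * (1 / b) ^ (n + 1) := by
    rw [← Real.dist_eq, dist_comm]
    exact hr (n + 1)
  have : 0 ≤ M := (abs_nonneg _).trans (hwM n)
  calc |b ^ n * (x + r * w n) - round (b ^ n * (x + r * w n))|
      ≤ |b ^ n * (x + r * w n) - b ^ n * (x + r' * w n)| := by
        rw [hr', pow_mul_add_greedyScale_succ hb0.ne' x (abs_pos.1 (hm.trans_le (hmw n)))]
        exact round_le _ _
    _ = b ^ n * (|r - r'| * |w n|) := by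
        rw [← mul_sub, add_sub_add_left_eq_sub, ← sub_mul, abs_mul, abs_mul, abs_of_pos hpow]
    _ ≤ b ^ n * (1 / m * (1 / b) ^ (n + 1) * M) := by
        gcongr
        exact hwM n
    _ = M / m / b := by
        rw [one_div_pow, pow_succ]
        field_simp

end GreedyScale

theorem eventually_const_mul_rpow_le_rpow (c : ℝ) {s t : ℝ} (hst : s < t) :
    ∀ᶠ n : ℕ in atTop, c * (n : ℝ) ^ s ≤ (n : ℝ) ^ t := by
  have hlarge : ∀ᶠ n : ℕ in atTop, c ≤ (n : ℝ) ^ (t - s) :=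
    ((tendsto_rpow_atTop (sub_pos.2 hst)).comp tendsto_natCast_atTop_atTop).eventually_ge_atTop c
  filter_upwards [hlarge, eventually_gt_atTop 0] with n hn hn0
  calc c * (n : ℝ) ^ s ≤ (n : ℝ) ^ (t - s) * (n : ℝ) ^ s := by gcongr
    _ = (n : ℝ) ^ t := by rw [← Real.rpow_add (by exact_mod_cast hn0), sub_add_cancel]

theorem eventually_mul_pow_le_pow_rpow (c : ℕ) {p : ℕ} {s : ℝ} (hp : p ≠ 0)
    (hs : 1 - 1 / (p : ℝ) < s) :
    ∀ᶠ q : ℕ in atTop, ((c * (2 * q + 1) ^ (p - 1) : ℕ) : ℝ) ≤ ((q : ℝ) ^ p) ^ s := by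
  have hexp : ((p - 1 : ℕ) : ℝ) < p * s := by
    have hp' : (0 : ℝ) < p := by exact_mod_cast Nat.pos_of_ne_zero hp
    have hmul := mul_lt_mul_of_pos_left hs hp'
    rw [Nat.cast_pred (Nat.pos_of_ne_zero hp)]
    rwa [mul_sub, mul_one, mul_one_div_cancel hp'.ne'] at hmul
  filter_upwards [eventually_const_mul_rpow_le_rpow (c * 3 ^ (p - 1)) hexp,
    eventually_ge_atTop 1] with q hq hq1
  have hq1' : (1 : ℝ) ≤ q := by exact_mod_cast hq1
  calc ((c * (2 * q + 1) ^ (p - 1) : ℕ) : ℝ) = c * (2 * q + 1 : ℝ) ^ (p - 1) := by push_cast; rfl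
    _ ≤ c * (3 * q : ℝ) ^ (p - 1) := by gcongr; linarith
    _ = c * 3 ^ (p - 1) * (q : ℝ) ^ ((p - 1 : ℕ) : ℝ) := by
        rw [Real.rpow_natCast, mul_pow, mul_assoc]
    _ ≤ (q : ℝ) ^ (p * s) := hq
    _ = ((q : ℝ) ^ p) ^ s := by rw [Real.rpow_mul (by positivity), Real.rpow_natCast]

theorem one_sub_one_div_natCast_nonneg (n : ℕ) : 0 ≤ 1 - 1 / (n : ℝ) := by
  rw [one_div]
  exact sub_nonneg.2 (Nat.cast_inv_le_one n)

theorem exists_periodic_bijOn_range_card (ι : Type*) [Fintype ι] [Nonempty ι] :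
    ∃ σ : ℕ → ι, Function.Periodic σ (Fintype.card ι) ∧
      BijOn σ (Finset.range (Fintype.card ι)) univ := by
  have e := (Fintype.equivFin ι).symm
  refine ⟨fun n => e (Fin.ofNat _ n), fun n => ?_, fun _ _ => mem_univ _, fun a ha b hb hab => ?_,
    fun i _ => ⟨e.symm i, ?_, ?_⟩⟩
  · simp only [Fin.ofNat, Nat.add_mod_right]
  · rw [Finset.mem_coe, Finset.mem_range] at ha hb
    simpa only [Fin.ofNat, Nat.mod_eq_of_lt ha, Nat.mod_eq_of_lt hb, e.apply_eq_iff_eq,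
      Fin.mk.injEq] using hab
  · exact Finset.mem_coe.2 (Finset.mem_range.2 (e.symm i).isLt)
  · simp only [Fin.ofNat_val_eq_self, e.apply_symm_apply]

section PatternSet

variable {ι : Type*} {w : ι → ℝ}

theorem prod_ite_eq_mul_pow_card_sub_one [Fintype ι] [DecidableEq ι] {M : Type*} [CommMonoid M]
    (i : ι) (a b : M) :
    ∏ j, (if j = i then a else b) = a * b ^ (Fintype.card ι - 1) := by
  rw [Finset.prod_ite, Finset.prod_const, Finset.prod_const, Finset.filter_eq' _ i,
    Finset.filter_ne', if_pos (Finset.mem_univ i), Finset.card_singleton, pow_one,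
    Finset.card_erase_of_mem (Finset.mem_univ i), Finset.card_univ]

theorem exists_forall_mem_nearIntegralSet [DecidableEq ι] {q K R : ℕ} {m x : ℝ} (σ : ℕ → ι)
    (hq : 2 ≤ q) (hm : 0 < m) (hmw : ∀ i, m ≤ |w i|) (hwK : ∀ i, |w i| ≤ K * m) (hx : |x| ≤ R) :
    ∃ r, ∀ i, x + r * w i ∈ nearIntegralSet q (fun n => if σ n = i then K else q) (R + K) := by
  have hq' : (2 : ℝ) ≤ q := by exact_mod_cast hq
  obtain ⟨r, hr, hnear⟩ :=
    exists_scale_forall_abs_sub_round_le hq' hm (fun n => hmw (σ n)) (fun n => hwK (σ n)) x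
  refine ⟨r, fun i => ⟨?_, fun n => ?_⟩⟩
  · calc |x + r * w i| ≤ |x| + |r| * |w i| := by rw [← abs_mul]; exact abs_add_le _ _
      _ ≤ R + 1 / m * (K * m) := by gcongr; exact hwK i
      _ = (R + K : ℕ) := by push_cast; field_simp
  · dsimp only
    split_ifs with hσ
    · rw [← hσ]
      simpa only [mul_div_cancel_right₀ _ hm.ne'] using hnear n
    · rw [div_self (by positivity)]
      exact (abs_sub_round _).trans one_half_lt_one.le

theorem exists_hasCoveringExponent_forall_pattern [Fintype ι] [Nonempty ι] (hw : ∀ i, w i ≠ 0)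
    {s : ℝ} (hs : 1 - 1 / (Fintype.card ι : ℝ) < s) {X : Set ℝ} (hX : IsBounded X) :
    ∃ A : Set ℝ, HasCoveringExponent A s ∧ ∀ x ∈ X, ∃ r : ℝ, ∀ i, x + r * w i ∈ A := by
  classical
  obtain ⟨R', hR'⟩ := hX.exists_norm_le
  obtain ⟨R, hR⟩ := exists_nat_ge R'
  obtain ⟨i₀, hmin⟩ := Finite.exists_min fun i => |w i|
  obtain ⟨i₁, hmax⟩ := Finite.exists_max fun i => |w i|
  have hm : 0 < |w i₀| := abs_pos.2 (hw i₀)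
  obtain ⟨K, hK⟩ := exists_nat_ge (|w i₁| / |w i₀|)
  have hwK : ∀ i, |w i| ≤ K * |w i₀| := fun i => (hmax i).trans ((div_le_iff₀ hm).1 hK)
  have hs0 : 0 ≤ s := (one_sub_one_div_natCast_nonneg _).trans hs.le
  obtain ⟨q, hqs, hq2⟩ := ((eventually_mul_pow_le_pow_rpow (2 * K + 1) Fintype.card_ne_zero hs).and
    (eventually_ge_atTop 2)).exists
  obtain ⟨σ, hσ, hbij⟩ := exists_periodic_bijOn_range_card ι
  let bound (i : ι) (n : ℕ) : ℕ := if σ n = i then K else q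
  refine ⟨⋃ i, nearIntegralSet q (bound i) (R + K), .iUnion fun i => ?_, fun x hx => ?_⟩
  · refine hasCoveringExponent_nearIntegralSet hq2 Fintype.card_ne_zero hs0
      (hσ.comp fun j => if j = i then K else q) ?_
    have hprod : ∏ n ∈ Finset.range (Fintype.card ι), (2 * bound i n + 1)
        = (2 * K + 1) * (2 * q + 1) ^ (Fintype.card ι - 1) := by
      rw [← prod_ite_eq_mul_pow_card_sub_one i]
      refine Finset.prod_nbij σ (fun _ _ => Finset.mem_univ _) hbij.injOn
        (by simpa only [Finset.coe_univ] using hbij.surjOn) fun n _ => ?_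
      exact apply_ite (2 * · + 1) _ _ _
    rwa [hprod]
  · obtain ⟨r, hr⟩ := exists_forall_mem_nearIntegralSet σ hq2 hm hmin hwK ((hR' x hx).trans hR)
    exact ⟨r, fun i => mem_iUnion_of_mem i (hr i)⟩

end PatternSet

section Discretization

variable {U : Finset ℕ} {A : Set ℝ}

theorem abs_add_mul_sub_round_le {x ρ : ℤ} {c r : ℝ} {N K u : ℕ} (hN : 0 < N)
    (hball : (x / N + r * u : ℝ) ∈ Metric.ball c (1 / (N : ℝ))) (hρ : |(ρ : ℝ) - N * r| ≤ 1)
    (hu : u ≤ K) : |x + ρ * u - round (N * c)| ≤ K + 1 := by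
  have hN' : (0 : ℝ) < N := by exact_mod_cast hN
  have hcover : |(x : ℝ) + N * r * u - N * c| < 1 :=
    calc |(x : ℝ) + N * r * u - N * c| = |(x / N + r * u - c) * N| := by
          congr 1
          field_simp
      _ < 1 := by
          rwa [abs_mul, abs_of_pos hN', ← lt_div_iff₀ hN', ← Real.dist_eq, ← Metric.mem_ball]
  have hscale : |((ρ : ℝ) - N * r) * u| ≤ K := by
    rw [abs_mul, Nat.abs_cast]
    exact (mul_le_of_le_one_left u.cast_nonneg hρ).trans (by exact_mod_cast hu)
  have hround := abs_sub_round ((N : ℝ) * c)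
  have hlt : |(x : ℝ) + ρ * u - round (N * c)| < K + 1 + 1 := by
    rw [abs_lt] at hcover ⊢
    rw [abs_le] at hscale hround
    constructor <;> linarith
  exact Int.lt_add_one_iff.1 (by exact_mod_cast hlt)

theorem G'Unat_le_card_mul {N K : ℕ} (hN : 0 < N) (hK : ∀ u ∈ U, u ≤ K) {t : Finset ℝ}
    (ht : A ⊆ ⋃ c ∈ t, Metric.ball c (1 / (N : ℝ)))
    (hA : ∀ x ∈ Icc (0 : ℝ) 1, ∃ r : ℝ, ∀ u ∈ U, x + r * (u : ℝ) ∈ A) :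
    G'Unat U N ≤ t.card * (2 * K + 3) := by
  classical
  have hN' : (0 : ℝ) < N := by exact_mod_cast hN
  let B : Finset ℤ := Finset.image₂ (fun c d => round ((N : ℝ) * c) + d) t
    (Finset.Icc (-(K + 1)) (K + 1))
  have hBcard : B.card ≤ t.card * (2 * K + 3) := by
    refine (Finset.card_image₂_le _ _ _).trans_eq ?_
    rw [Int.card_Icc]
    congr 1
    omega
  refine le_trans (Nat.sInf_le ⟨B, rfl, Finset.Ico 0 (N : ℤ), by simp, fun x hx => ?_⟩) hBcard
  obtain ⟨hx0, hxN⟩ := Finset.mem_Ico.1 hx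
  obtain ⟨r, hr⟩ := hA (x / N)
    ⟨div_nonneg (by exact_mod_cast hx0) hN'.le, (div_le_one hN').2 (by exact_mod_cast hxN.le)⟩
  obtain ⟨ρ, hρ0, hρ⟩ := exists_int_ne_zero_abs_sub_le_one (N * r)
  refine ⟨ρ, hρ0, fun u hu => ?_⟩
  obtain ⟨c, hc, hball⟩ := mem_iUnion₂.1 (ht (hr u hu))
  refine Finset.mem_image₂.2 ⟨c, hc, x + ρ * u - round (N * c), ?_, add_sub_cancel _ _⟩
  rw [Finset.mem_Icc, ← abs_le]
  exact abs_add_mul_sub_round_le hN hball hρ (hK u hu)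

theorem HasCoveringExponent.eventually_G'Unat_le {s t : ℝ} (hE : HasCoveringExponent A s)
    (hst : s < t) (hA : ∀ x ∈ Icc (0 : ℝ) 1, ∃ r : ℝ, ∀ u ∈ U, x + r * (u : ℝ) ∈ A) :
    ∀ᶠ N : ℕ in atTop, (G'Unat U N : ℝ) ≤ (N : ℝ) ^ t := by
  obtain ⟨C, hC⟩ := hE
  set K := U.sup id
  have hK : ∀ u ∈ U, u ≤ K := fun u hu => Finset.le_sup (f := id) hu
  filter_upwards [eventually_const_mul_rpow_le_rpow (C * (2 * K + 3)) hst,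
    eventually_gt_atTop 0] with N hN hN0
  obtain ⟨T, hT, hTC⟩ := hC (1 / N) (by positivity) (by
    rw [one_div]
    exact Nat.cast_inv_le_one N)
  rw [one_div_one_div] at hTC
  calc (G'Unat U N : ℝ) ≤ T.card * (2 * K + 3) := by
        exact_mod_cast G'Unat_le_card_mul hN0 hK hT hA
    _ ≤ C * (N : ℝ) ^ s * (2 * K + 3) := by gcongr
    _ = C * (2 * K + 3) * (N : ℝ) ^ s := by ring
    _ ≤ (N : ℝ) ^ t := hN

end Discretization

/-- For a set `U` of `k ≥ 2` distinct positive integers and any `ε > 0`, there is a bounded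
`A ⊆ ℝ` with `dim_M A ≤ 1 − 1/k + ε` containing a `U`-pattern with every basepoint in `[0,1]`;
consequently `G'_U(N) ≤ N^{1 − 1/k + ε}` for all sufficiently large `N`. -/
theorem stmt16 (U : Finset ℕ) (hU : ∀ u ∈ U, 0 < u) (hk : 2 ≤ U.card)
    (ε : ℝ) (hε : 0 < ε) :
    (∃ A : Set ℝ, IsBounded A ∧ dimM A ≤ 1 - 1 / (U.card : ℝ) + ε ∧
      ∀ x ∈ Icc (0 : ℝ) 1, ∃ r : ℝ, ∀ u ∈ U, x + r * (u : ℝ) ∈ A) ∧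
    (∃ N₀ : ℕ, ∀ N ≥ N₀, (G'Unat U N : ℝ) ≤ (N : ℝ) ^ (1 - 1 / (U.card : ℝ) + ε)) := by
  have hU₀ : U.Nonempty := Finset.card_pos.1 (by omega)
  have : Nonempty U := hU₀.to_subtype
  set s : ℝ := 1 - 1 / (U.card : ℝ) + ε / 2 with hs
  have hcard : 1 - 1 / (Fintype.card U : ℝ) < s := by
    rw [Fintype.card_coe]
    linarith
  have hs0 : 0 ≤ s := by linarith [one_sub_one_div_natCast_nonneg U.card]
  obtain ⟨A, hA, hpattern⟩ := exists_hasCoveringExponent_forall_pattern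
    (w := fun u : U => (u : ℝ)) (fun u => Nat.cast_ne_zero.2 (hU u u.2).ne') hcard
    (Metric.isBounded_Icc 0 1)
  have hpattern' : ∀ x ∈ Icc (0 : ℝ) 1, ∃ r : ℝ, ∀ u ∈ U, x + r * (u : ℝ) ∈ A := fun x hx =>
    (hpattern x hx).imp fun r hr u hu => hr ⟨u, hu⟩
  have hsε : s < 1 - 1 / (U.card : ℝ) + ε := by linarith
  exact ⟨⟨A, hA.isBounded, (hA.dimM_le hs0).trans hsε.le, hpattern'⟩,
    eventually_atTop.1 (hA.eventually_G'Unat_le hsε hpattern')⟩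
end

section
/- There exists an absolute constant c > 0 such that for all sufficiently large integers k and, for each such k, all sufficiently large integers N, one has G'_{[k]}(N) ≤ N^{1 − c/log k}, where [k] = {1, 2, ..., k}. -/
/-- `G'k k N` : the minimum cardinality of a finite set `B ⊆ ℤ` containing a `[k]`-pattern
`{x + r·i : 1 ≤ i ≤ k}` (a `k`-term arithmetic progression with basepoint `x` and nonzero
common difference `r`) for `N` distinct integer basepoints `x`. -/
noncomputable def G'k (k N : ℕ) : ℕ :=
  sInf { m | ∃ B : Finset ℤ, B.card = m ∧ ∃ X : Finset ℤ, X.card = N ∧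
    ∀ x ∈ X, ∃ r : ℤ, r ≠ 0 ∧ ∀ i ∈ Finset.Icc 1 k, x + r * (i : ℤ) ∈ B }

/-! Write a basepoint `x` in base `M`, with digits `f j`, and choose the common difference digit by
digit: `r = 1 + ∑ j, ρ j (f j) * M ^ j`. The `u`-th term of the progression is then determined by
the numbers `f j + u * ρ j (f j)`, so at most `∏ j, #{v + u * ρ j v | v < M}` values occur.

If `ρ j` is the indicator function of a random set of digits, then a given number in `[u, M)` is not
of the form `v + u * ρ j v` with probability `1/4`, so for `u` small compared to `M` the set of
these values has on average at most `θ * M` elements, where `θ < 1`. Letting every set of digits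
occur equally often among the positions turns this, by AM-GM, into a bound for the product that
holds for all `u` simultaneously. With `M = 10 * k` the exponent becomes
`log (θ * M) / log M = 1 - log (1 / θ) / log M`. -/

open Finset

/-- `B` contains a `U`-pattern `{x + r * u | u ∈ U}`, with `r ≠ 0`, for `N` distinct
basepoints `x`. -/
def ContainsPatterns (U : Finset ℕ) (N : ℕ) (B : Finset ℤ) : Prop :=
  ∃ X : Finset ℤ, #X = N ∧ ∀ x ∈ X, ∃ r : ℤ, r ≠ 0 ∧ ∀ u ∈ U, x + r * (u : ℤ) ∈ B

theorem G'k_le_card {k N : ℕ} {B : Finset ℤ} (hB : ContainsPatterns (Icc 1 k) N B) :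
    G'k k N ≤ #B :=
  Nat.sInf_le ⟨B, rfl, hB⟩

/-- The values `v + u * ρ v` of a digit of the `u`-th term of a progression, where `v < M` is the
corresponding digit of the basepoint and `ρ v` that of the common difference. No carrying takes
place, so these values may exceed `M`. -/
def digitImage (M u : ℕ) (ρ : ℕ → ℕ) : Finset ℕ :=
  (range M).image fun v ↦ v + u * ρ v

theorem exists_positional_weights (ι : Type*) [Fintype ι] (M : ℕ) :
    ∃ w : ι → ℕ, ∀ x < M ^ Fintype.card ι,
      ∃ f : ι → ℕ, (∀ j, f j < M) ∧ ∑ j, f j * w j = x := by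
  let e := Fintype.equivFin ι
  refine ⟨fun j ↦ M ^ (e j : ℕ), fun x hx ↦ ?_⟩
  obtain ⟨g, hg⟩ := finFunctionFinEquiv.surjective ⟨x, hx⟩
  refine ⟨fun j ↦ g (e j), fun j ↦ (g (e j)).isLt, ?_⟩
  rw [e.sum_comp fun j ↦ (g j : ℕ) * M ^ (j : ℕ), ← finFunctionFinEquiv_apply, hg]

theorem exists_containsPatterns_card_le {ι : Type*} [Fintype ι] (U : Finset ℕ) {M N : ℕ}
    (ρ : ι → ℕ → ℕ) (hN : N ≤ M ^ Fintype.card ι) :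
    ∃ B, ContainsPatterns U N B ∧ #B ≤ ∑ u ∈ U, ∏ j, #(digitImage M u (ρ j)) := by
  classical
  obtain ⟨w, hw⟩ := exists_positional_weights ι M
  let terms (u : ℕ) : Finset ℤ :=
    (Fintype.piFinset fun j ↦ digitImage M u (ρ j)).image fun h ↦ ((u + ∑ j, h j * w j : ℕ) : ℤ)
  refine ⟨U.biUnion terms, ⟨(range N).map Nat.castEmbedding, by simp, fun x hx ↦ ?_⟩, ?_⟩
  · obtain ⟨n, hn, rfl⟩ := mem_map.mp hx
    obtain ⟨f, hfM, rfl⟩ := hw n ((mem_range.mp hn).trans_le hN)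
    -- The summand `1` only serves to make the common difference nonzero.
    refine ⟨(1 + ∑ j, ρ j (f j) * w j : ℕ), by positivity, fun u hu ↦ mem_biUnion.mpr ⟨u, hu, ?_⟩⟩
    refine mem_image.mpr ⟨fun j ↦ f j + u * ρ j (f j), Fintype.mem_piFinset.mpr fun j ↦
      mem_image_of_mem _ (mem_range.mpr (hfM j)), ?_⟩
    have digitwise : u + ∑ j, (f j + u * ρ j (f j)) * w j
        = ∑ j, f j * w j + (1 + ∑ j, ρ j (f j) * w j) * u := by
      simp only [add_mul, sum_add_distrib, sum_mul, one_mul, mul_comm u, mul_right_comm _ u]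
      ring
    simpa only [Nat.castEmbedding_apply, Nat.cast_add, Nat.cast_mul] using
      congrArg (Nat.cast (R := ℤ)) digitwise
  · refine card_biUnion_le.trans (sum_le_sum fun u _ ↦ ?_)
    exact card_image_le.trans (Fintype.card_piFinset _).le

theorem four_mul_card_powerset_filter_mem_notMem {α : Type*} [DecidableEq α] {A : Finset α}
    {a b : α} (ha : a ∈ A) (hb : b ∈ A) (hab : a ≠ b) :
    4 * #{S ∈ A.powerset | b ∉ S ∧ a ∈ S} = 2 ^ #A := by
  have filter_eq_Icc : {S ∈ A.powerset | b ∉ S ∧ a ∈ S} = Icc {a} (A.erase b) := by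
    ext S
    simp only [mem_filter, mem_powerset, mem_Icc, singleton_subset_iff, subset_erase]
    tauto
  have two_le_card : 2 ≤ #A := one_lt_card.mpr ⟨a, ha, b, hb, hab⟩
  rw [filter_eq_Icc, card_Icc_finset (by simpa using ⟨hab, ha⟩), card_erase_of_mem hb,
    card_singleton, Nat.sub_sub, show 4 = 2 ^ 2 from rfl, ← pow_add,
    Nat.add_sub_cancel' two_le_card]

theorem digitImage_indicator_subset_range (M u : ℕ) (S : Finset ℕ) :
    digitImage M u ((S : Set ℕ).indicator 1) ⊆ range (M + u) := by
  intro x hx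
  obtain ⟨v, hv, rfl⟩ := mem_image.mp hx
  rw [mem_range] at hv ⊢
  by_cases hvS : v ∈ S <;> simp [hvS] <;> omega

theorem add_notMem_digitImage_indicator (M : ℕ) {u w : ℕ} {S : Finset ℕ} (hw : w ∉ S)
    (hwu : w + u ∈ S) : w + u ∉ digitImage M u ((S : Set ℕ).indicator 1) := by
  intro h
  obtain ⟨v, -, hv⟩ := mem_image.mp h
  by_cases hvS : v ∈ S
  · obtain rfl : v = w := by simpa [hvS] using hv
    exact hw hvS
  · obtain rfl : v = w + u := by simpa [hvS] using hv
    exact hvS hwu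

theorem card_digitImage_indicator_add_card_le {M u : ℕ} (hu : u ≤ M) (S : Finset ℕ) :
    #(digitImage M u ((S : Set ℕ).indicator 1)) + #{w ∈ range (M - u) | w ∉ S ∧ w + u ∈ S}
      ≤ M + u := by
  let missed := {w ∈ range (M - u) | w ∉ S ∧ w + u ∈ S}.map (addRightEmbedding u)
  have mem_missed {x : ℕ} (hx : x ∈ missed) :
      x < M ∧ x ∉ digitImage M u ((S : Set ℕ).indicator 1) := by
    simp only [missed, mem_map, mem_filter, mem_range, addRightEmbedding_apply] at hx
    obtain ⟨w, ⟨hwM, hwS, hwuS⟩, rfl⟩ := hx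
    exact ⟨by omega, add_notMem_digitImage_indicator M hwS hwuS⟩
  have disj : Disjoint (digitImage M u ((S : Set ℕ).indicator 1)) missed :=
    disjoint_right.mpr fun _ hx ↦ (mem_missed hx).2
  have missed_subset : missed ⊆ range (M + u) := fun x hx ↦
    mem_range.mpr ((mem_missed hx).1.trans_le (Nat.le_add_right M u))
  calc #(digitImage M u ((S : Set ℕ).indicator 1)) + #{w ∈ range (M - u) | w ∉ S ∧ w + u ∈ S}
      = #(digitImage M u ((S : Set ℕ).indicator 1) ∪ missed) := by
        rw [card_union_of_disjoint disj, card_map]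
    _ ≤ #(range (M + u)) :=
        card_le_card (union_subset (digitImage_indicator_subset_range M u S) missed_subset)
    _ = M + u := card_range _

theorem four_mul_sum_card_missed {M u : ℕ} (hu : u ≠ 0) :
    4 * ∑ S ∈ (range M).powerset, #{w ∈ range (M - u) | w ∉ S ∧ w + u ∈ S} = (M - u) * 2 ^ M := by
  have double_count : ∑ S ∈ (range M).powerset, #{w ∈ range (M - u) | w ∉ S ∧ w + u ∈ S}
      = ∑ w ∈ range (M - u), #{S ∈ (range M).powerset | w ∉ S ∧ w + u ∈ S} :=
    sum_card_bipartiteAbove_eq_sum_card_bipartiteBelow fun S w ↦ w ∉ S ∧ w + u ∈ S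
  have quarter {w : ℕ} (hw : w ∈ range (M - u)) :
      4 * #{S ∈ (range M).powerset | w ∉ S ∧ w + u ∈ S} = 2 ^ M := by
    rw [mem_range] at hw
    simpa using four_mul_card_powerset_filter_mem_notMem (A := range M) (a := w + u) (b := w)
      (by simp; omega) (by simp; omega) (by omega)
  rw [double_count, mul_sum, sum_congr rfl fun w hw ↦ quarter hw, sum_const, card_range,
    smul_eq_mul]

theorem four_mul_sum_card_digitImage_indicator_le {M u : ℕ} (hu : u ≠ 0) (huM : u ≤ M) :
    4 * ∑ S ∈ (range M).powerset, #(digitImage M u ((S : Set ℕ).indicator 1))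
      ≤ (3 * M + 5 * u) * 2 ^ M := by
  have total := sum_le_sum fun S (_ : S ∈ (range M).powerset) ↦
    card_digitImage_indicator_add_card_le huM S
  rw [sum_add_distrib, sum_const, card_powerset, card_range, smul_eq_mul] at total
  have missed := four_mul_sum_card_missed (M := M) hu
  obtain ⟨m, rfl⟩ := Nat.exists_eq_add_of_le huM
  rw [Nat.add_sub_cancel_left] at missed total
  linarith

theorem prod_le_sum_div_card_pow {ι : Type*} {s : Finset ι} {z : ι → ℝ}
    (hz : ∀ i ∈ s, 0 ≤ z i) : ∏ i ∈ s, z i ≤ ((∑ i ∈ s, z i) / #s) ^ #s := by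
  rcases s.eq_empty_or_nonempty with rfl | hs
  · simp
  have am_gm := Real.geom_mean_le_arith_mean s (fun _ ↦ 1) z (by simp) (by simpa using hs) hz
  simp only [Real.rpow_one, one_mul, sum_const, nsmul_eq_mul, mul_one] at am_gm
  have prod_z_nonneg : 0 ≤ ∏ i ∈ s, z i := prod_nonneg hz
  calc ∏ i ∈ s, z i = ((∏ i ∈ s, z i) ^ ((#s : ℝ)⁻¹)) ^ #s :=
        (Real.rpow_inv_natCast_pow prod_z_nonneg hs.card_ne_zero).symm
    _ ≤ ((∑ i ∈ s, z i) / #s) ^ #s := by gcongr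

theorem prod_card_digitImage_indicator_le {M u : ℕ} (hu : u ≠ 0) (huM : u ≤ M) :
    ∏ S ∈ (range M).powerset, (#(digitImage M u ((S : Set ℕ).indicator 1)) : ℝ)
      ≤ ((3 * M + 5 * u) / 4 : ℝ) ^ 2 ^ M := by
  have sum_le : 4 * ∑ S ∈ (range M).powerset, (#(digitImage M u ((S : Set ℕ).indicator 1)) : ℝ)
      ≤ (3 * M + 5 * u) * 2 ^ M := by
    exact_mod_cast four_mul_sum_card_digitImage_indicator_le hu huM
  refine (prod_le_sum_div_card_pow fun _ _ ↦ Nat.cast_nonneg _).trans ?_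
  rw [card_powerset, card_range]
  refine pow_le_pow_left₀ (by positivity) ?_ _
  rw [div_le_div_iff₀ (by positivity) (by norm_num)]
  push_cast
  linarith

theorem G'k_le_of_le_pow {k M N t : ℕ} (hkM : k ≤ M) (hN : N ≤ (M ^ 2 ^ M) ^ t) :
    (G'k k N : ℝ) ≤ k * (((3 * M + 5 * k) / 4 : ℝ) ^ 2 ^ M) ^ t := by
  let ρ (j : Fin t × (range M).powerset) : ℕ → ℕ := ((j.2 : Finset ℕ) : Set ℕ).indicator 1
  obtain ⟨B, hB, card_B⟩ := exists_containsPatterns_card_le (M := M) (N := N) (Icc 1 k) ρ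
    (by simpa [mul_comm t, pow_mul] using hN)
  have prod_le : ∀ u ∈ Icc 1 k,
      ∏ j, (#(digitImage M u (ρ j)) : ℝ) ≤ (((3 * M + 5 * k) / 4 : ℝ) ^ 2 ^ M) ^ t := by
    intro u hu
    obtain ⟨one_le_u, u_le_k⟩ := mem_Icc.mp hu
    simp only [Fintype.prod_prod_type, ρ, prod_const, card_univ, Fintype.card_fin]
    rw [prod_coe_sort _ fun S : Finset ℕ ↦ (#(digitImage M u ((S : Set ℕ).indicator 1)) : ℝ)]
    gcongr
    exact (prod_card_digitImage_indicator_le (by omega) (u_le_k.trans hkM)).trans (by gcongr)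
  calc (G'k k N : ℝ) ≤ ∑ u ∈ Icc 1 k, ∏ j, (#(digitImage M u (ρ j)) : ℝ) := by
        exact_mod_cast (G'k_le_card hB).trans card_B
    _ ≤ ∑ _u ∈ Icc 1 k, (((3 * M + 5 * k) / 4 : ℝ) ^ 2 ^ M) ^ t := sum_le_sum prod_le
    _ = k * (((3 * M + 5 * k) / 4 : ℝ) ^ 2 ^ M) ^ t := by simp

theorem pow_clog_le_mul {b n : ℕ} (hb : 1 < b) (hn : 1 < n) : b ^ Nat.clog b n ≤ b * n := by
  rw [← Nat.succ_pred_eq_of_pos (Nat.clog_pos hb hn), pow_succ']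
  exact Nat.mul_le_mul_left b (Nat.pow_pred_clog_lt_self hb hn).le

theorem eventually_le_rpow_of_le_mul_pow {f : ℕ → ℝ} {C Q α : ℝ} {P : ℕ} (hP : 1 < P)
    (hQ : 1 ≤ Q) (hC : 0 ≤ C) (hα : Real.logb P Q < α)
    (hf : ∀ N t : ℕ, N ≤ P ^ t → f N ≤ C * Q ^ t) :
    ∀ᶠ N : ℕ in Filter.atTop, f N ≤ (N : ℝ) ^ α := by
  set β := Real.logb P Q
  have one_lt_P : (1 : ℝ) < P := by exact_mod_cast hP
  have β_nonneg : 0 ≤ β := Real.logb_nonneg one_lt_P hQ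
  have P_rpow_β : (P : ℝ) ^ β = Q :=
    Real.rpow_logb (by linarith) one_lt_P.ne' (by linarith)
  have large := ((tendsto_rpow_atTop (sub_pos.mpr hα)).comp
    tendsto_natCast_atTop_atTop).eventually_ge_atTop (C * Q)
  filter_upwards [large, Filter.eventually_gt_atTop 1] with N hNlarge hN
  have N_pos : (0 : ℝ) < N := by positivity
  have pow_le : (P : ℝ) ^ Nat.clog P N ≤ P * N := by exact_mod_cast pow_clog_le_mul hP hN
  calc f N ≤ C * Q ^ Nat.clog P N := hf N _ (Nat.le_pow_clog hP N)
    _ = C * ((P : ℝ) ^ Nat.clog P N) ^ β := by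
        rw [← P_rpow_β, Real.rpow_pow_comm (Nat.cast_nonneg P)]
    _ ≤ C * (P * N : ℝ) ^ β := by gcongr
    _ = C * Q * (N : ℝ) ^ β := by
        rw [Real.mul_rpow (Nat.cast_nonneg P) N_pos.le, P_rpow_β, mul_assoc]
    _ ≤ (N : ℝ) ^ (α - β) * (N : ℝ) ^ β := by gcongr; exact hNlarge
    _ = (N : ℝ) ^ α := by rw [← Real.rpow_add N_pos, sub_add_cancel]

theorem logb_pow_mul_pow_lt {k : ℝ} (hk : 10 ≤ k) {D : ℕ} (hD : D ≠ 0) :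
    Real.logb ((10 * k) ^ D) ((35 / 4 * k) ^ D) < 1 - Real.log (8 / 7) / 3 / Real.log k := by
  have log_ten_mul_pos : 0 < Real.log (10 * k) := Real.log_pos (by linarith)
  have log_ten_mul_lt : Real.log (10 * k) < 3 * Real.log k := by
    have log_ten_le : Real.log 10 ≤ Real.log k := Real.log_le_log (by norm_num) hk
    have log_k_pos : 0 < Real.log k := Real.log_pos (by linarith)
    rw [Real.log_mul (by norm_num) (by linarith)]
    linarith
  have log_eq : Real.log (35 / 4 * k) = Real.log (10 * k) - Real.log (8 / 7) := by
    rw [← Real.log_div (by linarith) (by norm_num)]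
    congr 1
    ring
  calc Real.logb ((10 * k) ^ D) ((35 / 4 * k) ^ D)
      = 1 - Real.log (8 / 7) / Real.log (10 * k) := by
        rw [Real.logb, Real.log_pow, Real.log_pow, mul_div_mul_left _ _ (Nat.cast_ne_zero.mpr hD),
          log_eq, sub_div, div_self log_ten_mul_pos.ne']
    _ < 1 - Real.log (8 / 7) / (3 * Real.log k) :=
        sub_lt_sub_left (div_lt_div_of_pos_left (Real.log_pos (by norm_num)) log_ten_mul_pos
          log_ten_mul_lt) 1
    _ = 1 - Real.log (8 / 7) / 3 / Real.log k := by rw [div_div]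

/-- There is an absolute constant `c > 0` such that for all sufficiently large `k` and, for each
such `k`, all sufficiently large `N`, one has `G'_{[k]}(N) ≤ N^{1 − c/log k}`. -/
theorem stmt17 :
    ∃ c : ℝ, 0 < c ∧ ∃ k₀ : ℕ, ∀ k ≥ k₀, ∃ N₀ : ℕ, ∀ N ≥ N₀,
      (G'k k N : ℝ) ≤ (N : ℝ) ^ (1 - c / Real.log k) := by
  refine ⟨Real.log (8 / 7) / 3, div_pos (Real.log_pos (by norm_num)) three_pos, 10,
    fun k hk ↦ Filter.eventually_atTop.mp ?_⟩
  have ten_le_k : (10 : ℝ) ≤ k := by exact_mod_cast hk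
  have two_pow_ne_zero : 2 ^ (10 * k) ≠ 0 := by positivity
  refine eventually_le_rpow_of_le_mul_pow (P := (10 * k) ^ 2 ^ (10 * k))
    (Q := (35 / 4 * k : ℝ) ^ 2 ^ (10 * k)) (C := k) (Nat.one_lt_pow two_pow_ne_zero (by omega))
    (one_le_pow₀ (by linarith)) (Nat.cast_nonneg k) ?_ fun N t hN ↦ ?_
  · exact_mod_cast logb_pow_mul_pow_lt ten_le_k two_pow_ne_zero
  · have average_eq : (3 * (10 * k : ℕ) + 5 * k : ℝ) / 4 = 35 / 4 * k := by push_cast; ring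
    simpa only [average_eq] using G'k_le_of_le_pow (by omega : k ≤ 10 * k) hN
end
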